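/- Let F : [a,b]ⁿ → S_m be continuous, c ∈ ℝⁿ with positive entries, and λ > 0, n ≥ 2, such that for all σ, τ ∈ [a,b]ⁿ: λ_max(F(τ) − F(σ)) < λ‖τ−σ‖_{c,∞}/(n-1) implies cᵀτ > cᵀσ, where ‖d‖_{c,∞} := max_j c_j|d_j|. Let σ̂ ∈ [a,b]ⁿ, Ŷ := F(σ̂), δ > 0, and Y^δ ∈ S_m with ‖Y^δ − Ŷ‖₂ ≤ δ (spectral norm). Then: (i) the set {σ ∈ [a,b]ⁿ : F(σ) ⪯ Y^δ + δI} is nonempty and compact, so a minimizer σ^δ of cᵀσ over it exists; and (ii) every such minimizer satisfies ‖σ^δ − σ̂‖_{c,∞} ≤ 2(n-1)δ/λ. -/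

import Mathlib

open Matrix

/-- Largest eigenvalue of a symmetric matrix as supremum of the quadratic form
over unit vectors. -/
noncomputable def lamMax {m : ℕ} (A : Matrix (Fin m) (Fin m) ℝ) : ℝ :=
  sSup {r : ℝ | ∃ x : Fin m → ℝ, x ⬝ᵥ x = 1 ∧ r = x ⬝ᵥ A.mulVec x}

/-- Spectral norm of a symmetric matrix as supremum of the absolute value of the
quadratic form over unit vectors. -/
noncomputable def specNorm {m : ℕ} (A : Matrix (Fin m) (Fin m) ℝ) : ℝ :=
  sSup {r : ℝ | ∃ x : Fin m → ℝ, x ⬝ᵥ x = 1 ∧ r = |x ⬝ᵥ A.mulVec x|}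

lemma aux_bdd {m : ℕ} (A : Matrix (Fin m) (Fin m) ℝ) (x : Fin m → ℝ) (hx : x ⬝ᵥ x = 1) :
    |x ⬝ᵥ A.mulVec x| ≤ ∑ i, ∑ j, |A i j| := by
  have h1 : ∀ i, |x i| ≤ 1 := by
    intro i
    have : x i * x i ≤ x ⬝ᵥ x :=
      Finset.single_le_sum (f := fun i => x i * x i) (fun j _ => mul_self_nonneg (x j))
        (Finset.mem_univ i)
    rw [abs_le]
    constructor <;> nlinarith
  simp only [dotProduct, mulVec, Finset.mul_sum]
  refine (Finset.abs_sum_le_sum_abs _ _).trans (Finset.sum_le_sum fun i _ => ?_)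
  refine (Finset.abs_sum_le_sum_abs _ _).trans (Finset.sum_le_sum fun j _ => ?_)
  rw [abs_mul, abs_mul]
  have a1 := h1 i
  have a2 := h1 j
  calc |x i| * (|A i j| * |x j|) ≤ 1 * (|A i j| * 1) := by gcongr
    _ = _ := by ring

lemma aux_quad {m : ℕ} (A : Matrix (Fin m) (Fin m) ℝ) (δ : ℝ) (h : specNorm A ≤ δ)
    (x : Fin m → ℝ) : |x ⬝ᵥ A.mulVec x| ≤ δ * (x ⬝ᵥ x) := by
  have key : ∀ y : Fin m → ℝ, y ⬝ᵥ y = 1 → |y ⬝ᵥ A.mulVec y| ≤ δ := by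
    intro y hy
    refine le_trans ?_ h
    unfold specNorm
    refine le_csSup ⟨∑ i, ∑ j, |A i j|, ?_⟩ ⟨y, hy, rfl⟩
    rintro r ⟨z, hz, rfl⟩
    exact aux_bdd A z hz
  by_cases h0 : x = 0
  · simp [h0]
  have hne : x ⬝ᵥ x ≠ 0 := fun h => h0 (dotProduct_self_eq_zero.mp h)
  have hnn : 0 ≤ x ⬝ᵥ x := Finset.sum_nonneg fun i _ => mul_self_nonneg (x i)
  have hpos : 0 < x ⬝ᵥ x := lt_of_le_of_ne hnn (Ne.symm hne)
  set s := x ⬝ᵥ x with hs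
  have hsq : (√s)⁻¹ * (√s)⁻¹ = s⁻¹ := by rw [← mul_inv, Real.mul_self_sqrt hnn]
  have := key ((√s)⁻¹ • x) (by
    rw [smul_dotProduct, dotProduct_smul, smul_eq_mul, smul_eq_mul, ← mul_assoc, hsq, ← hs]
    exact inv_mul_cancel₀ hne)
  rw [mulVec_smul, smul_dotProduct, dotProduct_smul, smul_eq_mul, smul_eq_mul, ← mul_assoc, hsq,
    abs_mul, abs_of_pos (inv_pos.mpr hpos), inv_mul_le_iff₀ hpos] at this
  linarith

lemma aux_psd {m : ℕ} (A : Matrix (Fin m) (Fin m) ℝ) :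
    A.PosSemidef ↔ A.IsHermitian ∧ ∀ x : Fin m → ℝ, 0 ≤ x ⬝ᵥ A.mulVec x := by
  rw [posSemidef_iff_dotProduct_mulVec]
  simp

theorem stmt7 (n m : ℕ) (hn : 2 ≤ n) (a b : ℝ) (hab : a < b)
    (hne : (Finset.univ : Finset (Fin n)).Nonempty)
    (F : (Fin n → ℝ) → Matrix (Fin m) (Fin m) ℝ)
    (hF : ContinuousOn F (Set.Icc (fun _ => a) (fun _ => b)))
    (hFsym : ∀ σ ∈ Set.Icc (fun _ => a : Fin n → ℝ) (fun _ => b), (F σ).IsHermitian)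
    (c : Fin n → ℝ) (hc : ∀ j, 0 < c j) (lam : ℝ) (hlam : 0 < lam)
    (hyp : ∀ σ ∈ Set.Icc (fun _ => a : Fin n → ℝ) (fun _ => b),
      ∀ τ ∈ Set.Icc (fun _ => a : Fin n → ℝ) (fun _ => b),
        lamMax (F τ - F σ) <
          lam * (Finset.univ.sup' hne fun j => c j * |τ j - σ j|) / (n - 1 : ℝ) →
        c ⬝ᵥ σ < c ⬝ᵥ τ)
    (σhat : Fin n → ℝ)
    (hσhat : σhat ∈ Set.Icc (fun _ => a : Fin n → ℝ) (fun _ => b))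
    (δ : ℝ) (hδ : 0 < δ)
    (Yδ : Matrix (Fin m) (Fin m) ℝ) (hYsym : Yδ.IsHermitian)
    (hnoise : specNorm (Yδ - F σhat) ≤ δ) :
    {σ | σ ∈ Set.Icc (fun _ => a : Fin n → ℝ) (fun _ => b) ∧
        (Yδ + δ • (1 : Matrix (Fin m) (Fin m) ℝ) - F σ).PosSemidef}.Nonempty ∧
    IsCompact {σ | σ ∈ Set.Icc (fun _ => a : Fin n → ℝ) (fun _ => b) ∧
        (Yδ + δ • (1 : Matrix (Fin m) (Fin m) ℝ) - F σ).PosSemidef} ∧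
    (∃ σd ∈ {σ | σ ∈ Set.Icc (fun _ => a : Fin n → ℝ) (fun _ => b) ∧
        (Yδ + δ • (1 : Matrix (Fin m) (Fin m) ℝ) - F σ).PosSemidef},
      ∀ σ ∈ {σ | σ ∈ Set.Icc (fun _ => a : Fin n → ℝ) (fun _ => b) ∧
        (Yδ + δ • (1 : Matrix (Fin m) (Fin m) ℝ) - F σ).PosSemidef},
        c ⬝ᵥ σd ≤ c ⬝ᵥ σ) ∧
    (∀ σd ∈ {σ | σ ∈ Set.Icc (fun _ => a : Fin n → ℝ) (fun _ => b) ∧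
        (Yδ + δ • (1 : Matrix (Fin m) (Fin m) ℝ) - F σ).PosSemidef},
      (∀ σ ∈ {σ | σ ∈ Set.Icc (fun _ => a : Fin n → ℝ) (fun _ => b) ∧
        (Yδ + δ • (1 : Matrix (Fin m) (Fin m) ℝ) - F σ).PosSemidef},
          c ⬝ᵥ σd ≤ c ⬝ᵥ σ) →
      Finset.univ.sup' hne (fun j => c j * |σd j - σhat j|) ≤
        2 * (n - 1 : ℝ) * δ / lam) := by
  have hfe : σhat ∈ {σ | σ ∈ Set.Icc (fun _ => a : Fin n → ℝ) (fun _ => b) ∧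
        (Yδ + δ • (1 : Matrix (Fin m) (Fin m) ℝ) - F σ).PosSemidef} := by
    refine ⟨hσhat, (aux_psd _).2 ⟨?_, fun x => ?_⟩⟩
    · refine (hYsym.add ?_).sub (hFsym _ hσhat)
      simp [Matrix.IsHermitian]
    · have h := (abs_le.mp (aux_quad _ δ hnoise x)).1
      simp only [sub_mulVec, add_mulVec, smul_mulVec, one_mulVec, dotProduct_sub,
        dotProduct_add, dotProduct_smul, smul_eq_mul] at h ⊢
      linarith
  have hcomp : IsCompact {σ | σ ∈ Set.Icc (fun _ => a : Fin n → ℝ) (fun _ => b) ∧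
        (Yδ + δ • (1 : Matrix (Fin m) (Fin m) ℝ) - F σ).PosSemidef} := by
    have hcl : IsClosed {M : Matrix (Fin m) (Fin m) ℝ |
        (Yδ + δ • (1 : Matrix (Fin m) (Fin m) ℝ) - M).PosSemidef} := by
      simp only [aux_psd, Matrix.IsHermitian, Set.ofPred_and, Set.ofPred_forall]
      refine IsClosed.inter (isClosed_eq (by fun_prop) (by fun_prop)) ?_
      exact isClosed_iInter fun x => isClosed_le (by fun_prop) (by fun_prop)
    exact isCompact_Icc.of_isClosed_subset
      (hF.preimage_isClosed_of_isClosed isClosed_Icc hcl) (fun σ h => h.1)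
  refine ⟨⟨σhat, hfe⟩, hcomp, ?_, ?_⟩
  · obtain ⟨s, hs, hmin⟩ := hcomp.exists_isMinOn ⟨σhat, hfe⟩ (f := fun σ => c ⬝ᵥ σ)
      (by unfold dotProduct; fun_prop)
    exact ⟨s, hs, fun σ hσ => hmin hσ⟩
  · intro σd hσd hmin
    by_contra! hlt
    have hn1 : (0 : ℝ) < n - 1 := by
      have : (2 : ℝ) ≤ n := by exact_mod_cast hn
      linarith
    refine absurd (hyp σhat hσhat σd hσd.1 ?_) (not_lt.mpr (hmin σhat hfe))
    refine lt_of_le_of_lt (b := 2 * δ) ?_ ?_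
    · refine Real.sSup_le ?_ (by linarith)
      rintro r ⟨x, hx, rfl⟩
      have h1 := (abs_le.mp (aux_quad _ δ hnoise x)).2
      have h2 := ((aux_psd _).1 hσd.2).2 x
      simp only [sub_mulVec, add_mulVec, smul_mulVec, one_mulVec, dotProduct_sub,
        dotProduct_add, dotProduct_smul, smul_eq_mul, hx] at h1 h2 ⊢
      linarith
    · rw [div_lt_iff₀ hlam] at hlt
      rw [lt_div_iff₀ hn1]
      linarith
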